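/- Let M and N be commutative rings with involution (ring automorphisms of order ≤ 2), with 2 invertible in M. Equip M⊗N (tensor over ℤ) with the diagonal involution τ(a⊗b) = ā⊗b̄. Then: (1) the coinvariants (M⊗N)_{C₂} carry a well-defined commutative ring structure with product [a⊗b]·[c⊗d] = [ac⊗bd] + [āc⊗b̄d] and multiplicative unit [½⊗1]; and (2) the map [a⊗b] ↦ a⊗b + ā⊗b̄ is a ring isomorphism from (M⊗N)_{C₂} onto the fixed subring (M⊗N)^{C₂}. -/

import Mathlib

/-!
Write `h = ½ ⊗ 1`, so that `τ h = h` and `h + h = 1`. The norm `z ↦ z + τ z` kills every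
`z - τ z` because `τ² = 1`, hence it induces an additive map from the coinvariants to the fixed
subring. Its inverse is `w ↦ [h w]`: if `τ w = w`, then `h w + τ (h w) = h w + h w = w`, and
conversely `[h (z + τ z)] = [h z] + [τ (h z)] = [h z] + [h z] = [z]`. This is `normEquiv`.

The ring structure on the coinvariants is the one transported along this additive equivalence
(`transportCommRing`), which leaves the addition untouched; part (2) then holds by construction.
The product formula and the formula for the unit are checked after applying the norm, the former
being `(x + τ x)(y + τ y) = (x y + τ (x y)) + (τ x y + τ (τ x y))`.
-/

set_option maxHeartbeats 1600000
set_option linter.unusedVariables false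

noncomputable section
open TensorProduct

universe u

namespace Paper12

variable (M N : Type u) [CommRing M] [CommRing N]

/-- The diagonal involution `τ(a ⊗ b) = ā ⊗ b̄` on the ring `M ⊗ N`, as a ring map. -/
def tauRing (σM : M →+* M) (σN : N →+* N) : (M ⊗[ℤ] N) →+* (M ⊗[ℤ] N) :=
  (Algebra.TensorProduct.map σM.toIntAlgHom σN.toIntAlgHom).toRingHom

/-- The coinvariants `(M ⊗ N)_{C₂}` (quotient by the subgroup of all `z - τ z`). -/
def coinv (σM : M →+* M) (σN : N →+* N) : Type u :=
  (M ⊗[ℤ] N) ⧸ LinearMap.range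
    (LinearMap.id - (tauRing M N σM σN).toIntLinearMap)

instance (σM : M →+* M) (σN : N →+* N) : AddCommGroup (coinv M N σM σN) :=
  inferInstanceAs (AddCommGroup ((M ⊗[ℤ] N) ⧸ LinearMap.range
    (LinearMap.id - (tauRing M N σM σN).toIntLinearMap)))

/-- The class of `z` in the coinvariants. -/
def mkCo (σM : M →+* M) (σN : N →+* N) : (M ⊗[ℤ] N) →ₗ[ℤ] coinv M N σM σN :=
  (LinearMap.range (LinearMap.id - (tauRing M N σM σN).toIntLinearMap)).mkQ

/-- The fixed subring `(M ⊗ N)^{C₂}`. -/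
def fixSubring (σM : M →+* M) (σN : N →+* N) : Subring (M ⊗[ℤ] N) :=
  RingHom.eqLocus (tauRing M N σM σN) (RingHom.id (M ⊗[ℤ] N))

/-- The commutative ring structure transported to an additive group `A` along an additive
equivalence with a commutative ring. The additive group structure of `A` is kept as it is. -/
@[reducible]
def transportCommRing {A R : Type u} [AddCommGroup A] [CommRing R] (e : A ≃+ R) : CommRing A :=
  { (inferInstance : AddCommGroup A) with
    mul := fun x y => e.symm (e x * e y)
    one := e.symm 1
    mul_assoc := fun x y z => by
      change e.symm (e (e.symm (e x * e y)) * e z) = e.symm (e x * e (e.symm (e y * e z)))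
      simp [mul_assoc]
    one_mul := fun x => by
      change e.symm (e (e.symm 1) * e x) = x
      simp
    mul_one := fun x => by
      change e.symm (e x * e (e.symm 1)) = x
      simp
    mul_comm := fun x y => by
      change e.symm (e x * e y) = e.symm (e y * e x)
      rw [mul_comm]
    left_distrib := fun x y z => by
      change e.symm (e x * e (y + z)) = e.symm (e x * e y) + e.symm (e x * e z)
      simp [mul_add]
    right_distrib := fun x y z => by
      change e.symm (e (x + y) * e z) = e.symm (e x * e z) + e.symm (e y * e z)
      simp [add_mul]
    zero_mul := fun x => by
      change e.symm (e 0 * e x) = 0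
      simp
    mul_zero := fun x => by
      change e.symm (e x * e 0) = 0
      simp }

section

variable {M N}
variable (σM : M →+* M) (σN : N →+* N)

lemma tauRing_tmul (a : M) (b : N) :
    tauRing M N σM σN (a ⊗ₜ[ℤ] b) = σM a ⊗ₜ[ℤ] σN b := rfl

lemma tauRing_tauRing (hσM : ∀ a, σM (σM a) = a) (hσN : ∀ b, σN (σN b) = b)
    (z : M ⊗[ℤ] N) : tauRing M N σM σN (tauRing M N σM σN z) = z := by
  induction z with
  | zero => simp
  | tmul a b => simp only [tauRing_tmul, hσM, hσN]
  | add x y hx hy => rw [map_add, map_add, hx, hy]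

lemma mkCo_tauRing (z : M ⊗[ℤ] N) :
    mkCo M N σM σN (tauRing M N σM σN z) = mkCo M N σM σN z := by
  refine ((Submodule.Quotient.eq _).2 ?_).symm
  exact ⟨z, rfl⟩

lemma half_add_half (h2 : Invertible (2 : M)) :
    (⅟ (2 : M)) ⊗ₜ[ℤ] (1 : N) + (⅟ (2 : M)) ⊗ₜ[ℤ] (1 : N) = 1 := by
  rw [← add_tmul, ← two_mul, mul_invOf_self, Algebra.TensorProduct.one_def]

lemma tauRing_half (h2 : Invertible (2 : M)) :
    tauRing M N σM σN ((⅟ (2 : M)) ⊗ₜ[ℤ] (1 : N)) = (⅟ (2 : M)) ⊗ₜ[ℤ] (1 : N) := by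
  have h : σM (⅟ (2 : M)) = ⅟ (2 : M) := by
    refine (invOf_eq_right_inv ?_).symm
    calc (2 : M) * σM (⅟ (2 : M)) = σM 2 * σM (⅟ (2 : M)) := by rw [map_ofNat]
      _ = 1 := by rw [← map_mul, mul_invOf_self, map_one]
  rw [tauRing_tmul, h, map_one]

/-- The norm `z ↦ z + τ z`, as a linear map into the ring `M ⊗ N`. -/
def normHom : (M ⊗[ℤ] N) →ₗ[ℤ] (M ⊗[ℤ] N) :=
  LinearMap.id + (tauRing M N σM σN).toIntLinearMap

/-- The map `[z] ↦ z + τ z` induced by the norm on the coinvariants. -/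
def normCo (hσM : ∀ a, σM (σM a) = a) (hσN : ∀ b, σN (σN b) = b) :
    coinv M N σM σN →+ (M ⊗[ℤ] N) :=
  (Submodule.liftQ
    (LinearMap.range (LinearMap.id - (tauRing M N σM σN).toIntLinearMap)) (normHom σM σN) (by
      rintro _ ⟨z, rfl⟩
      change (z - tauRing M N σM σN z) + tauRing M N σM σN (z - tauRing M N σM σN z) = 0
      rw [map_sub, tauRing_tauRing σM σN hσM hσN]
      abel)).toAddMonoidHom

lemma normCo_mkCo (hσM : ∀ a, σM (σM a) = a) (hσN : ∀ b, σN (σN b) = b) (z : M ⊗[ℤ] N) :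
    normCo σM σN hσM hσN (mkCo M N σM σN z) = z + tauRing M N σM σN z := rfl

lemma mkCo_surjective : Function.Surjective (mkCo M N σM σN) :=
  Submodule.mkQ_surjective _

/-- The additive equivalence `[z] ↦ z + τ z` from the coinvariants onto the fixed subring, with
inverse `w ↦ [(½ ⊗ 1) w]`. -/
def normEquiv (hσM : ∀ a, σM (σM a) = a) (hσN : ∀ b, σN (σN b) = b)
    (h2 : Invertible (2 : M)) : coinv M N σM σN ≃+ fixSubring M N σM σN where
  toFun x := ⟨normCo σM σN hσM hσN x, by
    obtain ⟨z, rfl⟩ := mkCo_surjective σM σN x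
    change tauRing M N σM σN (z + tauRing M N σM σN z) = z + tauRing M N σM σN z
    rw [map_add, tauRing_tauRing σM σN hσM hσN, add_comm]⟩
  invFun w := mkCo M N σM σN ((⅟ (2 : M)) ⊗ₜ[ℤ] (1 : N) * (w : M ⊗[ℤ] N))
  left_inv x := by
    obtain ⟨z, rfl⟩ := mkCo_surjective σM σN x
    change mkCo M N σM σN ((⅟ (2 : M)) ⊗ₜ[ℤ] (1 : N) * (z + tauRing M N σM σN z)) = _
    have h : (⅟ (2 : M)) ⊗ₜ[ℤ] (1 : N) * tauRing M N σM σN z =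
        tauRing M N σM σN ((⅟ (2 : M)) ⊗ₜ[ℤ] (1 : N) * z) := by
      rw [map_mul, tauRing_half]
    rw [mul_add, h, map_add, mkCo_tauRing, ← map_add, ← add_mul, half_add_half, one_mul]
  right_inv w := by
    apply Subtype.ext
    have hw : tauRing M N σM σN (w : M ⊗[ℤ] N) = w := w.2
    change (⅟ (2 : M)) ⊗ₜ[ℤ] (1 : N) * (w : M ⊗[ℤ] N) +
      tauRing M N σM σN ((⅟ (2 : M)) ⊗ₜ[ℤ] (1 : N) * (w : M ⊗[ℤ] N)) = w
    rw [map_mul, tauRing_half, hw, ← add_mul, half_add_half, one_mul]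
  map_add' x y := Subtype.ext (map_add (normCo σM σN hσM hσN) x y)

lemma normEquiv_mkCo (hσM : ∀ a, σM (σM a) = a) (hσN : ∀ b, σN (σN b) = b)
    (h2 : Invertible (2 : M)) (z : M ⊗[ℤ] N) :
    (normEquiv σM σN hσM hσN h2 (mkCo M N σM σN z) : M ⊗[ℤ] N) =
      z + tauRing M N σM σN z := rfl

/-- The product formula, for the product transported along `normEquiv`. -/
lemma normEquiv_symm_mul (hσM : ∀ a, σM (σM a) = a) (hσN : ∀ b, σN (σN b) = b)
    (h2 : Invertible (2 : M)) (x y : M ⊗[ℤ] N) :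
    (normEquiv σM σN hσM hσN h2).symm
        (normEquiv σM σN hσM hσN h2 (mkCo M N σM σN x) *
          normEquiv σM σN hσM hσN h2 (mkCo M N σM σN y)) =
      mkCo M N σM σN (x * y) + mkCo M N σM σN (tauRing M N σM σN x * y) := by
  rw [AddEquiv.symm_apply_eq, ← map_add]
  apply Subtype.ext
  rw [Subring.coe_mul, normEquiv_mkCo, normEquiv_mkCo, normEquiv_mkCo]
  simp only [map_add, map_mul, tauRing_tauRing σM σN hσM hσN]
  ring

end

/-- **Statement 12.** Let `M`, `N` be commutative rings with involution, with `2`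
invertible in `M`. Then (1) the coinvariants `(M ⊗ N)_{C₂}` carry a (unique) commutative
ring structure, with the quotient addition, with product
`[a⊗b]·[c⊗d] = [ac⊗bd] + [āc⊗b̄d]`, and with unit `[½ ⊗ 1]`; and (2) the map
`[a⊗b] ↦ a⊗b + ā⊗b̄` is a ring isomorphism onto the fixed subring `(M ⊗ N)^{C₂}`. -/
theorem statement12 {M N : Type u} [CommRing M] [CommRing N]
    (σM : M →+* M) (σN : N →+* N)
    (hσM : ∀ a, σM (σM a) = a) (hσN : ∀ b, σN (σN b) = b)
    (h2 : Invertible (2 : M)) :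
    ∃ inst : CommRing (coinv M N σM σN),
      -- the ring structure extends the quotient group structure
      inst.toRing.toAddCommGroup = (inferInstance : AddCommGroup (coinv M N σM σN)) ∧
      (letI := inst;
        -- the multiplication and the unit are the asserted ones
        (∀ a b c d : _,
          mkCo M N σM σN (a ⊗ₜ[ℤ] b) * mkCo M N σM σN (c ⊗ₜ[ℤ] d) =
            mkCo M N σM σN ((a * c) ⊗ₜ[ℤ] (b * d)) +
              mkCo M N σM σN ((σM a * c) ⊗ₜ[ℤ] (σN b * d))) ∧
        ((1 : coinv M N σM σN) = mkCo M N σM σN ((⅟ (2 : M)) ⊗ₜ[ℤ] (1 : N))) ∧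
        -- and `[z] ↦ z + τ z` is a ring isomorphism onto the fixed subring
        ∃ e : coinv M N σM σN ≃+* ↥(fixSubring M N σM σN),
          ∀ z : M ⊗[ℤ] N,
            (e (mkCo M N σM σN z) : M ⊗[ℤ] N) = z + tauRing M N σM σN z) := by
  refine ⟨transportCommRing (normEquiv σM σN hσM hσN h2), rfl, ?_, ?_, ?_⟩
  · intro a b c d
    have h := normEquiv_symm_mul σM σN hσM hσN h2 (a ⊗ₜ[ℤ] b) (c ⊗ₜ[ℤ] d)
    rw [tauRing_tmul, Algebra.TensorProduct.tmul_mul_tmul,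
      Algebra.TensorProduct.tmul_mul_tmul] at h
    exact h
  · change mkCo M N σM σN ((⅟ (2 : M)) ⊗ₜ[ℤ] (1 : N) * 1) = _
    rw [mul_one]
  · let _ := transportCommRing (normEquiv σM σN hσM hσN h2)
    refine ⟨{ normEquiv σM σN hσM hσN h2 with
      map_mul' := fun x y => (normEquiv σM σN hσM hσN h2).apply_symm_apply _ }, ?_⟩
    exact normEquiv_mkCo σM σN hσM hσN h2

end Paper12
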